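/- arXiv:2505.10301 — 2 statements merged into one kernel-verified Lean document; each statement's English description precedes it below -/
import Mathlib

section
/- Let M be a nonzero finite-dimensional simple U_v-module which is a weight module. Then wt(M) has exactly one maximal element ω with respect to the partial order ≥, and M is a highest weight module of highest weight ω; in particular E_j·M_ω = 0 and Ē_j·M_ω = 0 for all 1 ≤ j ≤ n−1, and M = U_v·m for some nonzero m ∈ M_ω. (Proposition 3.3 of the paper.) -/
open scoped BigOperators

noncomputable section

namespace QueerPaper

/-- The field `F = ℚ(v)` of rational functions. -/
abbrev F : Type := RatFunc ℚ

/-- The element `v` of `F`. -/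
noncomputable def v : F := RatFunc.X

lemma v_ne_zero : v ≠ 0 := RatFunc.X_ne_zero

/-- `v` as a unit of `F`. -/
noncomputable def vU : Fˣ := Units.mk0 v v_ne_zero

/-- Generators of the quantum queer superalgebra `U_v(q_n)`:
`K_i, K_i⁻¹, K̄_i` for `1 ≤ i ≤ n` (here indexed by `Fin n`, 0-based) and
`E_j, Ē_j, F_j, F̄_j` for `1 ≤ j ≤ n−1` (here indexed by `Fin (n-1)`, 0-based). -/
inductive QGen (n : ℕ) : Type
  | K : Fin n → QGen n
  | Kinv : Fin n → QGen n
  | Kb : Fin n → QGen n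
  | E : Fin (n - 1) → QGen n
  | Eb : Fin (n - 1) → QGen n
  | Fg : Fin (n - 1) → QGen n
  | Fb : Fin (n - 1) → QGen n

/-- The free `F`-algebra on the generators. -/
abbrev FA (n : ℕ) : Type := FreeAlgebra F (QGen n)

namespace Pre

variable (n : ℕ)

def K (i : Fin n) : FA n := FreeAlgebra.ι F (QGen.K i)
def Kinv (i : Fin n) : FA n := FreeAlgebra.ι F (QGen.Kinv i)
def Kb (i : Fin n) : FA n := FreeAlgebra.ι F (QGen.Kb i)
def E (j : Fin (n - 1)) : FA n := FreeAlgebra.ι F (QGen.E j)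
def Eb (j : Fin (n - 1)) : FA n := FreeAlgebra.ι F (QGen.Eb j)
def Fg (j : Fin (n - 1)) : FA n := FreeAlgebra.ι F (QGen.Fg j)
def Fb (j : Fin (n - 1)) : FA n := FreeAlgebra.ι F (QGen.Fb j)

end Pre

/-- `Fin (n-1) → Fin n`, preserving the underlying index (paper index `j`). -/
def finL {n : ℕ} (j : Fin (n - 1)) : Fin n := ⟨(j : ℕ), by have := j.2; omega⟩

/-- `Fin (n-1) → Fin n`, shifting the index by one (paper index `j+1`). -/
def finR {n : ℕ} (j : Fin (n - 1)) : Fin n := ⟨(j : ℕ) + 1, by have := j.2; omega⟩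

/-- The pairing `⟨i,j⟩ = δ_{i,j} − δ_{i,j+1}` (in the paper's 1-based indexing;
here both indices are 0-based). -/
def pr {n : ℕ} (i : Fin n) (j : Fin (n - 1)) : ℤ :=
  (if (i : ℕ) = (j : ℕ) then 1 else 0) - (if (i : ℕ) = (j : ℕ) + 1 then 1 else 0)

/-- Kronecker delta with values in `F`. -/
def dlt {m : ℕ} (i j : Fin m) : F := if i = j then 1 else 0

open Pre in
/-- The defining relations (QQ1)–(QQ6) of `U_v(q_n)`. -/
inductive qRel (n : ℕ) : FA n → FA n → Prop
  -- (QQ1)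
  | KKinv (i : Fin n) : qRel n (K n i * Kinv n i) 1
  | KinvK (i : Fin n) : qRel n (Kinv n i * K n i) 1
  | KK (i j : Fin n) : qRel n (K n i * K n j) (K n j * K n i)
  | KKb (i j : Fin n) : qRel n (K n i * Kb n j) (Kb n j * K n i)
  | KbKb (i j : Fin n) :
      qRel n (Kb n i * Kb n j + Kb n j * Kb n i)
        ((dlt i j * (2 / (v ^ 2 - v⁻¹ ^ 2))) • (K n i ^ 2 - Kinv n i ^ 2))
  -- (QQ2)
  | KE (i : Fin n) (j : Fin (n - 1)) :
      qRel n (K n i * E n j) ((v ^ pr i j) • (E n j * K n i))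
  | KEb (i : Fin n) (j : Fin (n - 1)) :
      qRel n (K n i * Eb n j) ((v ^ pr i j) • (Eb n j * K n i))
  | KF (i : Fin n) (j : Fin (n - 1)) :
      qRel n (K n i * Fg n j) ((v ^ (-pr i j)) • (Fg n j * K n i))
  | KFb (i : Fin n) (j : Fin (n - 1)) :
      qRel n (K n i * Fb n j) ((v ^ (-pr i j)) • (Fb n j * K n i))
  -- (QQ3)
  | KbE (j : Fin (n - 1)) :
      qRel n (Kb n (finL j) * E n j - v • (E n j * Kb n (finL j))) (Eb n j * Kinv n (finL j))
  | KbE' (j : Fin (n - 1)) :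
      qRel n (v • (Kb n (finR j) * E n j) - E n j * Kb n (finR j)) (-(Kinv n (finR j) * Eb n j))
  | KbF (j : Fin (n - 1)) :
      qRel n (Kb n (finL j) * Fg n j - v • (Fg n j * Kb n (finL j))) (-(Fb n j * K n (finL j)))
  | KbF' (j : Fin (n - 1)) :
      qRel n (v • (Kb n (finR j) * Fg n j) - Fg n j * Kb n (finR j)) (K n (finR j) * Fb n j)
  | KbEb (j : Fin (n - 1)) :
      qRel n (Kb n (finL j) * Eb n j + v • (Eb n j * Kb n (finL j))) (E n j * Kinv n (finL j))
  | KbEb' (j : Fin (n - 1)) :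
      qRel n (v • (Kb n (finR j) * Eb n j) + Eb n j * Kb n (finR j)) (Kinv n (finR j) * E n j)
  | KbFb (j : Fin (n - 1)) :
      qRel n (Kb n (finL j) * Fb n j + v • (Fb n j * Kb n (finL j))) (Fg n j * K n (finL j))
  | KbFb' (j : Fin (n - 1)) :
      qRel n (v • (Kb n (finR j) * Fb n j) + Fb n j * Kb n (finR j)) (K n (finR j) * Fg n j)
  | KbEcomm (i : Fin n) (j : Fin (n - 1)) (h1 : (i : ℕ) ≠ (j : ℕ)) (h2 : (i : ℕ) ≠ (j : ℕ) + 1) :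
      qRel n (Kb n i * E n j - E n j * Kb n i) 0
  | KbFcomm (i : Fin n) (j : Fin (n - 1)) (h1 : (i : ℕ) ≠ (j : ℕ)) (h2 : (i : ℕ) ≠ (j : ℕ) + 1) :
      qRel n (Kb n i * Fg n j - Fg n j * Kb n i) 0
  | KbEbcomm (i : Fin n) (j : Fin (n - 1)) (h1 : (i : ℕ) ≠ (j : ℕ)) (h2 : (i : ℕ) ≠ (j : ℕ) + 1) :
      qRel n (Kb n i * Eb n j + Eb n j * Kb n i) 0
  | KbFbcomm (i : Fin n) (j : Fin (n - 1)) (h1 : (i : ℕ) ≠ (j : ℕ)) (h2 : (i : ℕ) ≠ (j : ℕ) + 1) :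
      qRel n (Kb n i * Fb n j + Fb n j * Kb n i) 0
  -- (QQ4)
  | EF (i j : Fin (n - 1)) :
      qRel n (E n i * Fg n j - Fg n j * E n i)
        ((dlt i j * (1 / (v - v⁻¹))) •
          (K n (finL i) * Kinv n (finR i) - Kinv n (finL i) * K n (finR i)))
  | EbFb (i j : Fin (n - 1)) :
      qRel n (Eb n i * Fb n j + Fb n j * Eb n i)
        (dlt i j •
          ((1 / (v - v⁻¹)) • (K n (finL i) * K n (finR i) - Kinv n (finL i) * Kinv n (finR i))
            + (v - v⁻¹) • (Kb n (finL i) * Kb n (finR i))))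
  | EFb (i j : Fin (n - 1)) :
      qRel n (E n i * Fb n j - Fb n j * E n i)
        (dlt i j • (Kinv n (finR i) * Kb n (finL i) - Kb n (finR i) * Kinv n (finL i)))
  | EbF (i j : Fin (n - 1)) :
      qRel n (Eb n i * Fg n j - Fg n j * Eb n i)
        (dlt i j • (K n (finR i) * Kb n (finL i) - Kb n (finR i) * K n (finL i)))
  -- (QQ5)
  | EbSq (i : Fin (n - 1)) :
      qRel n (Eb n i ^ 2) ((-((v - v⁻¹) / (v + v⁻¹))) • (E n i ^ 2))
  | FbSq (i : Fin (n - 1)) :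
      qRel n (Fb n i ^ 2) (((v - v⁻¹) / (v + v⁻¹)) • (Fg n i ^ 2))
  | EEbcomm (i j : Fin (n - 1)) (h1 : (i : ℕ) ≠ (j : ℕ) + 1) (h2 : (j : ℕ) ≠ (i : ℕ) + 1) :
      qRel n (E n i * Eb n j - Eb n j * E n i) 0
  | FFbcomm (i j : Fin (n - 1)) (h1 : (i : ℕ) ≠ (j : ℕ) + 1) (h2 : (j : ℕ) ≠ (i : ℕ) + 1) :
      qRel n (Fg n i * Fb n j - Fb n j * Fg n i) 0
  | EEcomm (i j : Fin (n - 1)) (h : (i : ℕ) > (j : ℕ) + 1 ∨ (j : ℕ) > (i : ℕ) + 1) :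
      qRel n (E n i * E n j - E n j * E n i) 0
  | FFcomm (i j : Fin (n - 1)) (h : (i : ℕ) > (j : ℕ) + 1 ∨ (j : ℕ) > (i : ℕ) + 1) :
      qRel n (Fg n i * Fg n j - Fg n j * Fg n i) 0
  | EbEbanti (i j : Fin (n - 1)) (h : (i : ℕ) > (j : ℕ) + 1 ∨ (j : ℕ) > (i : ℕ) + 1) :
      qRel n (Eb n i * Eb n j + Eb n j * Eb n i) 0
  | FbFbanti (i j : Fin (n - 1)) (h : (i : ℕ) > (j : ℕ) + 1 ∨ (j : ℕ) > (i : ℕ) + 1) :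
      qRel n (Fb n i * Fb n j + Fb n j * Fb n i) 0
  | EEnext (j : Fin (n - 1)) (h : (j : ℕ) + 1 < n - 1) :
      qRel n (E n j * E n ⟨(j : ℕ) + 1, h⟩ - v • (E n ⟨(j : ℕ) + 1, h⟩ * E n j))
        (Eb n j * Eb n ⟨(j : ℕ) + 1, h⟩ + v • (Eb n ⟨(j : ℕ) + 1, h⟩ * Eb n j))
  | EEbnext (j : Fin (n - 1)) (h : (j : ℕ) + 1 < n - 1) :
      qRel n (E n j * Eb n ⟨(j : ℕ) + 1, h⟩ - v • (Eb n ⟨(j : ℕ) + 1, h⟩ * E n j))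
        (Eb n j * E n ⟨(j : ℕ) + 1, h⟩ - v • (E n ⟨(j : ℕ) + 1, h⟩ * Eb n j))
  | FFnext (j : Fin (n - 1)) (h : (j : ℕ) + 1 < n - 1) :
      qRel n (Fg n j * Fg n ⟨(j : ℕ) + 1, h⟩ - v • (Fg n ⟨(j : ℕ) + 1, h⟩ * Fg n j))
        (-(Fb n j * Fb n ⟨(j : ℕ) + 1, h⟩ + v • (Fb n ⟨(j : ℕ) + 1, h⟩ * Fb n j)))
  | FFbnext (j : Fin (n - 1)) (h : (j : ℕ) + 1 < n - 1) :
      qRel n (Fg n j * Fb n ⟨(j : ℕ) + 1, h⟩ - v • (Fb n ⟨(j : ℕ) + 1, h⟩ * Fg n j))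
        (Fb n j * Fg n ⟨(j : ℕ) + 1, h⟩ - v • (Fg n ⟨(j : ℕ) + 1, h⟩ * Fb n j))
  -- (QQ6)
  | serreE (i j : Fin (n - 1)) (h : (i : ℕ) = (j : ℕ) + 1 ∨ (j : ℕ) = (i : ℕ) + 1) :
      qRel n (E n i ^ 2 * E n j - (v + v⁻¹) • (E n i * E n j * E n i) + E n j * E n i ^ 2) 0
  | serreF (i j : Fin (n - 1)) (h : (i : ℕ) = (j : ℕ) + 1 ∨ (j : ℕ) = (i : ℕ) + 1) :
      qRel n (Fg n i ^ 2 * Fg n j - (v + v⁻¹) • (Fg n i * Fg n j * Fg n i) + Fg n j * Fg n i ^ 2) 0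
  | serreEEb (i j : Fin (n - 1)) (h : (i : ℕ) = (j : ℕ) + 1 ∨ (j : ℕ) = (i : ℕ) + 1) :
      qRel n (E n i ^ 2 * Eb n j - (v + v⁻¹) • (E n i * Eb n j * E n i) + Eb n j * E n i ^ 2) 0
  | serreFFb (i j : Fin (n - 1)) (h : (i : ℕ) = (j : ℕ) + 1 ∨ (j : ℕ) = (i : ℕ) + 1) :
      qRel n (Fg n i ^ 2 * Fb n j - (v + v⁻¹) • (Fg n i * Fb n j * Fg n i) + Fb n j * Fg n i ^ 2) 0

/-- The quantum queer superalgebra `U_v(q_n)`, as the quotient of the free algebra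
by the two-sided ideal generated by the relations (QQ1)–(QQ6). -/
abbrev Uq (n : ℕ) : Type := RingQuot (qRel n)

/-- The quotient map. -/
noncomputable def mk (n : ℕ) : FA n →ₐ[F] Uq n := RingQuot.mkAlgHom F (qRel n)

noncomputable def uK (n : ℕ) (i : Fin n) : Uq n := mk n (Pre.K n i)
noncomputable def uKinv (n : ℕ) (i : Fin n) : Uq n := mk n (Pre.Kinv n i)
noncomputable def uKb (n : ℕ) (i : Fin n) : Uq n := mk n (Pre.Kb n i)
noncomputable def uE (n : ℕ) (j : Fin (n - 1)) : Uq n := mk n (Pre.E n j)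
noncomputable def uEb (n : ℕ) (j : Fin (n - 1)) : Uq n := mk n (Pre.Eb n j)
noncomputable def uF (n : ℕ) (j : Fin (n - 1)) : Uq n := mk n (Pre.Fg n j)
noncomputable def uFb (n : ℕ) (j : Fin (n - 1)) : Uq n := mk n (Pre.Fb n j)

section Modules

variable (n : ℕ) (M : Type) [AddCommGroup M] [Module F M]
  [Module (Uq n) M] [IsScalarTower F (Uq n) M]

lemma uq_smul_f_smul (u : Uq n) (c : F) (m : M) : u • (c • m) = c • (u • m) := by
  rw [← algebraMap_smul (Uq n) c m, ← mul_smul, ← Algebra.commutes, mul_smul,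
    algebraMap_smul]

/-- The weight space `M_ω = {m ∈ M | K_i m = ω_i m for all i}`. -/
noncomputable def weightSpace (ω : Fin n → Fˣ) : Submodule F M where
  carrier := {m | ∀ i : Fin n, uK n i • m = (ω i : F) • m}
  add_mem' := by
    intro a b ha hb i
    rw [smul_add, ha i, hb i, smul_add]
  zero_mem' := by
    intro i; rw [smul_zero, smul_zero]
  smul_mem' := by
    intro c m hm i
    rw [uq_smul_f_smul, hm i, smul_comm]

/-- `ω` is a weight of `M` if the weight space `M_ω` is nonzero. -/
def IsWeight (ω : Fin n → Fˣ) : Prop := weightSpace n M ω ≠ ⊥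

/-- `M` is a weight module if it is the internal direct sum of its weight spaces. -/
def IsWeightModule : Prop :=
  iSupIndep (fun ω : {ω : Fin n → Fˣ // IsWeight n M ω} => weightSpace n M ω.1) ∧
    (⨆ ω : {ω : Fin n → Fˣ // IsWeight n M ω}, weightSpace n M ω.1) = ⊤

/-- `m` is a highest weight vector of weight `ω`. -/
def IsHWVector (ω : Fin n → Fˣ) (m : M) : Prop :=
  m ≠ 0 ∧ (∀ i : Fin n, uK n i • m = (ω i : F) • m) ∧
    ∀ j : Fin (n - 1), uE n j • m = 0 ∧ uEb n j • m = 0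

/-- `M` is a highest weight module of highest weight `ω`. -/
def IsHWModule (ω : Fin n → Fˣ) : Prop :=
  ∃ m : M, IsHWVector n M ω m ∧ Submodule.span (Uq n) {m} = ⊤

end Modules

/-- The partial order on weights: `ω ≥ γ` iff `ω = v^β γ` for some `β ∈ Q⁺`,
i.e. there is `b : ℕ → ℕ` with `b 0 = 0`, `b n = 0` and
`ω_i = v^{b_i − b_{i−1}} γ_i` for all `i` (1-based paper indexing). -/
def wge (n : ℕ) (ω γ : Fin n → Fˣ) : Prop :=
  ∃ b : ℕ → ℕ, b 0 = 0 ∧ b n = 0 ∧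
    ∀ i : Fin n, ω i = (vU ^ (b ((i : ℕ) + 1)) * (vU ^ (b (i : ℕ)))⁻¹) * γ i

/-- Strict order on weights. -/
def wgt (n : ℕ) (ω γ : Fin n → Fˣ) : Prop := wge n ω γ ∧ ω ≠ γ

/-- `ω` is a maximal weight of `M`: it is a weight and no weight of `M` is strictly
bigger. -/
def IsMaximalWeight (n : ℕ) (M : Type) [AddCommGroup M] [Module F M]
    [Module (Uq n) M] [IsScalarTower F (Uq n) M] (ω : Fin n → Fˣ) : Prop :=
  IsWeight n M ω ∧ ∀ γ : Fin n → Fˣ, IsWeight n M γ → ¬ wgt n γ ω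

/-!
The defining relations let every product of generators be sorted into lowering ones `F_j`, `F̄_j`,
then Cartan ones `K_i`, `K_i⁻¹`, `K̄_i`, then raising ones `E_j`, `Ē_j`, which gives the triangular
decomposition `U_v = U⁻ U⁰ U⁺`. A finite-dimensional weight module has finitely many weights, hence
a maximal one `ω`. Since `E_j` and `Ē_j` shift weights up by `v^{α_j}`, they annihilate `M_ω`, so
for `0 ≠ m ∈ M_ω` simplicity gives `M = U_v m = U⁻ U⁰ m`. As `U⁰` preserves weights and `U⁻` lowers
them, every weight of `M` is `≤ ω`, and therefore `ω` is the only maximal weight.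
-/

section Straightening

open Submodule

variable {R A M : Type*} [CommSemiring R] [Semiring A] [Algebra R A]
  [AddCommMonoid M] [Module R M] [Module A M] [IsScalarTower R A M]

lemma mul_mem_span_mul_span {S T : Set A} {s t : A} (hs : s ∈ S) (ht : t ∈ T) :
    s * t ∈ span R S * span R T :=
  mul_mem_mul (subset_span hs) (subset_span ht)

variable (R) in
/-- The subalgebra generated by `S`, regarded as a submodule so that products of such subalgebras
can be compared in the idempotent semiring `Submodule R A`. -/
abbrev adjoinSubmodule (S : Set A) : Submodule R A :=
  Subalgebra.toSubmodule (Algebra.adjoin R S)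

lemma one_le_adjoinSubmodule (S : Set A) : 1 ≤ adjoinSubmodule R S :=
  Submodule.one_le.2 (one_mem (Algebra.adjoin R S))

lemma span_le_adjoinSubmodule (S : Set A) : span R S ≤ adjoinSubmodule R S :=
  Algebra.span_le_adjoin R S

lemma adjoinSubmodule_mul_self (S : Set A) :
    adjoinSubmodule R S * adjoinSubmodule R S = adjoinSubmodule R S :=
  Subalgebra.isIdempotentElem_toSubmodule _

lemma span_mul_adjoinSubmodule_mul_le (S : Set A) (X : Submodule R A) :
    span R S * (adjoinSubmodule R S * X) ≤ adjoinSubmodule R S * X := calc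
  span R S * (adjoinSubmodule R S * X)
    ≤ adjoinSubmodule R S * (adjoinSubmodule R S * X) := by
    gcongr; exact span_le_adjoinSubmodule S
  _ = adjoinSubmodule R S * X := by rw [← mul_assoc, adjoinSubmodule_mul_self]

lemma adjoinSubmodule_smul_le {S : Set A} {N : Submodule R M}
    (hN : ∀ s ∈ S, ∀ x ∈ N, s • x ∈ N) : adjoinSubmodule R S • N ≤ N := by
  refine smul_le.2 fun a ha => ?_
  induction ha using Algebra.adjoin_induction with
  | mem s hs => exact hN s hs
  | algebraMap r => simpa only [algebraMap_smul] using fun x => N.smul_mem r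
  | add a b _ _ iha ihb => simpa only [add_smul] using fun x hx => N.add_mem (iha x hx) (ihb x hx)
  | mul a b _ _ iha ihb => simpa only [mul_smul] using fun x hx => iha _ (ihb x hx)

lemma adjoinSubmodule_mul_le {S : Set A} {X Y : Submodule R A} (hYX : Y ≤ X)
    (hX : span R S * X ≤ X) : adjoinSubmodule R S * Y ≤ X :=
  (mul_le_mul_right hYX _).trans <|
    adjoinSubmodule_smul_le fun _ hs _ hx => hX (mul_mem_mul (subset_span hs) hx)

lemma mul_adjoinSubmodule_le {S : Set A} {X Y : Submodule R A} (hYX : Y ≤ X)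
    (hX : X * span R S ≤ X) : Y * adjoinSubmodule R S ≤ X := by
  suffices h : ∀ a ∈ Algebra.adjoin R S, ∀ x ∈ X, x * a ∈ X from
    mul_le.2 fun y hy a ha => h a ha y (hYX hy)
  intro a ha
  induction ha using Algebra.adjoin_induction with
  | mem s hs => exact fun x hx => hX (mul_mem_mul hx (subset_span hs))
  | algebraMap r =>
    simpa only [← Algebra.commutes, ← Algebra.smul_def] using fun x => X.smul_mem r
  | add a b _ _ iha ihb => simpa only [mul_add] using fun x hx => X.add_mem (iha x hx) (ihb x hx)
  | mul a b _ _ iha ihb => simpa only [← mul_assoc] using fun x hx => ihb _ (iha x hx)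

lemma adjoinSubmodule_mul_comm_le {S T : Set A}
    (h : span R S * span R T ≤ span R T * span R S) :
    adjoinSubmodule R S * adjoinSubmodule R T ≤ adjoinSubmodule R T * adjoinSubmodule R S := by
  have span_mul_le : span R S * adjoinSubmodule R T ≤ adjoinSubmodule R T * span R S :=
    mul_adjoinSubmodule_le (le_mul_of_one_le_left' (one_le_adjoinSubmodule T)) <| calc
      adjoinSubmodule R T * span R S * span R T
        ≤ adjoinSubmodule R T * (span R T * span R S) := by rw [mul_assoc]; gcongr
      _ ≤ adjoinSubmodule R T * (adjoinSubmodule R T * span R S) := by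
        gcongr; exact span_le_adjoinSubmodule T
      _ = adjoinSubmodule R T * span R S := by rw [← mul_assoc, adjoinSubmodule_mul_self]
  refine adjoinSubmodule_mul_le (le_mul_of_one_le_right' (one_le_adjoinSubmodule S)) ?_
  calc
    span R S * (adjoinSubmodule R T * adjoinSubmodule R S)
      ≤ adjoinSubmodule R T * span R S * adjoinSubmodule R S := by rw [← mul_assoc]; gcongr
    _ ≤ adjoinSubmodule R T * (adjoinSubmodule R S * adjoinSubmodule R S) := by
      rw [mul_assoc]; gcongr; exact span_le_adjoinSubmodule S
    _ = adjoinSubmodule R T * adjoinSubmodule R S := by rw [adjoinSubmodule_mul_self]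

lemma span_mul_adjoinSubmodule_le {L C P : Set A}
    (hCL : span R C * span R L ≤ span R L * span R C)
    (hPL : span R P * span R L ≤ span R L * span R P ⊔ adjoinSubmodule R C) :
    span R P * adjoinSubmodule R L ≤
      adjoinSubmodule R L * (span R P ⊔ adjoinSubmodule R C) := by
  set X := span R P ⊔ adjoinSubmodule R C
  have straighten : X * span R L ≤ adjoinSubmodule R L * X := by
    rw [Submodule.sup_mul]
    refine sup_le (hPL.trans (sup_le ?_ ?_)) ?_
    · gcongr
      exacts [span_le_adjoinSubmodule L, le_sup_left]
    · exact le_sup_right.trans (le_mul_of_one_le_left' (one_le_adjoinSubmodule L))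
    · calc
        adjoinSubmodule R C * span R L ≤ adjoinSubmodule R C * adjoinSubmodule R L := by
          gcongr; exact span_le_adjoinSubmodule L
        _ ≤ adjoinSubmodule R L * adjoinSubmodule R C := adjoinSubmodule_mul_comm_le hCL
        _ ≤ adjoinSubmodule R L * X := by gcongr; exact le_sup_right
  refine mul_adjoinSubmodule_le
    (le_sup_left.trans (le_mul_of_one_le_left' (one_le_adjoinSubmodule L))) ?_
  calc
    adjoinSubmodule R L * X * span R L
      ≤ adjoinSubmodule R L * (adjoinSubmodule R L * X) := by rw [mul_assoc]; gcongr
    _ = adjoinSubmodule R L * X := by rw [← mul_assoc, adjoinSubmodule_mul_self]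

-- The triple product contains `1` and is stable under left multiplication by every generator.
theorem adjoinSubmodule_mul_mul_eq_top {L C P : Set A}
    (hgen : Algebra.adjoin R (L ∪ C ∪ P) = ⊤)
    (hCL : span R C * span R L ≤ span R L * span R C)
    (hPC : span R P * span R C ≤ span R C * span R P)
    (hPL : span R P * span R L ≤ span R L * span R P ⊔ adjoinSubmodule R C) :
    adjoinSubmodule R L * (adjoinSubmodule R C * adjoinSubmodule R P) = ⊤ := by
  set B := adjoinSubmodule R C * adjoinSubmodule R P
  have hPB : span R P * B ≤ B := calc
    span R P * B ≤ adjoinSubmodule R P * adjoinSubmodule R C * adjoinSubmodule R P := by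
      rw [← mul_assoc]; gcongr; exact span_le_adjoinSubmodule P
    _ ≤ adjoinSubmodule R C * adjoinSubmodule R P * adjoinSubmodule R P := by
      gcongr ?_ * _; exact adjoinSubmodule_mul_comm_le hPC
    _ = B := by rw [mul_assoc, adjoinSubmodule_mul_self]
  have hCB : adjoinSubmodule R C * B = B := by rw [← mul_assoc, adjoinSubmodule_mul_self]
  have hC : span R C * (adjoinSubmodule R L * B) ≤ adjoinSubmodule R L * B := calc
    span R C * (adjoinSubmodule R L * B)
      ≤ adjoinSubmodule R C * adjoinSubmodule R L * B := by
      rw [← mul_assoc]; gcongr; exact span_le_adjoinSubmodule C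
    _ ≤ adjoinSubmodule R L * adjoinSubmodule R C * B := by
      gcongr ?_ * _; exact adjoinSubmodule_mul_comm_le hCL
    _ = adjoinSubmodule R L * B := by rw [mul_assoc, hCB]
  have hP : span R P * (adjoinSubmodule R L * B) ≤ adjoinSubmodule R L * B := calc
    span R P * (adjoinSubmodule R L * B)
      ≤ adjoinSubmodule R L * (span R P ⊔ adjoinSubmodule R C) * B := by
      rw [← mul_assoc]; gcongr ?_ * _; exact span_mul_adjoinSubmodule_le hCL hPL
    _ ≤ adjoinSubmodule R L * B := by
      rw [mul_assoc, Submodule.sup_mul]; gcongr; exact sup_le hPB hCB.le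
  have one_le : 1 ≤ adjoinSubmodule R L * B := one_le_mul (one_le_adjoinSubmodule L)
    (one_le_mul (one_le_adjoinSubmodule C) (one_le_adjoinSubmodule P))
  rw [eq_top_iff, ← Algebra.top_toSubmodule, ← hgen, ← mul_one (Subalgebra.toSubmodule _)]
  refine adjoinSubmodule_mul_le one_le ?_
  simpa only [span_union, Submodule.sup_mul] using
    sup_le (sup_le (span_mul_adjoinSubmodule_mul_le L B) hC) hP

end Straightening

section Generators

variable (n : ℕ)

/-- The generators `F_j`, `F̄_j` of the negative part of `U_v(q_n)`. -/
def loweringGens : Set (Uq n) := Set.range (uF n) ∪ Set.range (uFb n)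

/-- The even generators `K_i`, `K_i⁻¹` of the Cartan part of `U_v(q_n)`. -/
def torusGens : Set (Uq n) := Set.range (uK n) ∪ Set.range (uKinv n)

/-- The generators `K_i`, `K_i⁻¹`, `K̄_i` of the Cartan part of `U_v(q_n)`. -/
def cartanGens : Set (Uq n) := torusGens n ∪ Set.range (uKb n)

/-- The generators `E_j`, `Ē_j` of the positive part of `U_v(q_n)`. -/
def raisingGens : Set (Uq n) := Set.range (uE n) ∪ Set.range (uEb n)

lemma adjoin_gens_eq_top :
    Algebra.adjoin F (loweringGens n ∪ cartanGens n ∪ raisingGens n) = ⊤ := by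
  have hmk : (mk n).range = ⊤ :=
    (AlgHom.range_eq_top _).2 (RingQuot.mkAlgHom_surjective F (qRel n))
  rw [eq_top_iff, ← hmk, ← Algebra.map_top, ← FreeAlgebra.adjoin_range_ι, AlgHom.map_adjoin]
  refine Algebra.adjoin_mono ?_
  rintro _ ⟨_, ⟨g, rfl⟩, rfl⟩
  cases g with
  | K i => exact .inl (.inr (.inl (.inl ⟨i, rfl⟩)))
  | Kinv i => exact .inl (.inr (.inl (.inr ⟨i, rfl⟩)))
  | Kb i => exact .inl (.inr (.inr ⟨i, rfl⟩))
  | E j => exact .inr (.inl ⟨j, rfl⟩)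
  | Eb j => exact .inr (.inr ⟨j, rfl⟩)
  | Fg j => exact .inl (.inl (.inl ⟨j, rfl⟩))
  | Fb j => exact .inl (.inl (.inr ⟨j, rfl⟩))

variable {n}

lemma mk_eq_of_rel {a b : FA n} (h : qRel n a b) : mk n a = mk n b :=
  RingQuot.mkAlgHom_rel F h

lemma uK_mul_uKinv (i : Fin n) : uK n i * uKinv n i = 1 := by
  simpa only [uK, uKinv, map_mul, map_one] using mk_eq_of_rel (qRel.KKinv i)

lemma uKinv_mul_uK (i : Fin n) : uKinv n i * uK n i = 1 := by
  simpa only [uK, uKinv, map_mul, map_one] using mk_eq_of_rel (qRel.KinvK i)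

lemma uKb_finL_mul_uF (j : Fin (n - 1)) :
    uKb n (finL j) * uF n j = v • (uF n j * uKb n (finL j)) - uFb n j * uK n (finL j) := by
  rw [sub_eq_neg_add, ← sub_eq_iff_eq_add]
  simpa only [uK, uKb, uF, uFb, map_mul, map_smul, map_sub, map_neg]
    using mk_eq_of_rel (qRel.KbF j)

lemma v_smul_uKb_finR_mul_uF (j : Fin (n - 1)) :
    v • (uKb n (finR j) * uF n j) = uK n (finR j) * uFb n j + uF n j * uKb n (finR j) := by
  rw [← sub_eq_iff_eq_add]
  simpa only [uK, uKb, uF, uFb, map_mul, map_smul, map_sub] using mk_eq_of_rel (qRel.KbF' j)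

lemma uKb_mul_uF_of_ne {i : Fin n} {j : Fin (n - 1)} (hL : i ≠ finL j) (hR : i ≠ finR j) :
    uKb n i * uF n j = uF n j * uKb n i := by
  rw [← sub_eq_zero]
  simpa only [uKb, uF, map_mul, map_sub, map_zero] using
    mk_eq_of_rel (qRel.KbFcomm i j (Fin.val_ne_iff.2 hL) (Fin.val_ne_iff.2 hR))

lemma uKb_finL_mul_uFb (j : Fin (n - 1)) :
    uKb n (finL j) * uFb n j = uF n j * uK n (finL j) - v • (uFb n j * uKb n (finL j)) := by
  rw [eq_sub_iff_add_eq]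
  simpa only [uK, uKb, uF, uFb, map_mul, map_smul, map_add] using mk_eq_of_rel (qRel.KbFb j)

lemma v_smul_uKb_finR_mul_uFb (j : Fin (n - 1)) :
    v • (uKb n (finR j) * uFb n j) = uK n (finR j) * uF n j - uFb n j * uKb n (finR j) := by
  rw [eq_sub_iff_add_eq]
  simpa only [uK, uKb, uF, uFb, map_mul, map_smul, map_add] using mk_eq_of_rel (qRel.KbFb' j)

lemma uKb_mul_uFb_of_ne {i : Fin n} {j : Fin (n - 1)} (hL : i ≠ finL j) (hR : i ≠ finR j) :
    uKb n i * uFb n j = -(uFb n j * uKb n i) := by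
  rw [← add_eq_zero_iff_eq_neg]
  simpa only [uKb, uFb, map_mul, map_add, map_zero] using
    mk_eq_of_rel (qRel.KbFbcomm i j (Fin.val_ne_iff.2 hL) (Fin.val_ne_iff.2 hR))

lemma v_smul_uE_mul_uKb_finL (j : Fin (n - 1)) :
    v • (uE n j * uKb n (finL j)) = uKb n (finL j) * uE n j - uEb n j * uKinv n (finL j) := by
  rw [eq_sub_iff_add_eq, ← eq_sub_iff_add_eq']
  simpa only [uKinv, uKb, uE, uEb, map_mul, map_smul, map_sub] using
    (mk_eq_of_rel (qRel.KbE j)).symm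

lemma uE_mul_uKb_finR (j : Fin (n - 1)) :
    uE n j * uKb n (finR j) = v • (uKb n (finR j) * uE n j) + uKinv n (finR j) * uEb n j := by
  rw [← sub_eq_iff_eq_add', ← neg_inj, neg_sub]
  simpa only [uKinv, uKb, uE, uEb, map_mul, map_smul, map_sub, map_neg] using
    mk_eq_of_rel (qRel.KbE' j)

lemma uE_mul_uKb_of_ne {i : Fin n} {j : Fin (n - 1)} (hL : i ≠ finL j) (hR : i ≠ finR j) :
    uE n j * uKb n i = uKb n i * uE n j := by
  rw [eq_comm, ← sub_eq_zero]
  simpa only [uKb, uE, map_mul, map_sub, map_zero] using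
    mk_eq_of_rel (qRel.KbEcomm i j (Fin.val_ne_iff.2 hL) (Fin.val_ne_iff.2 hR))

lemma v_smul_uEb_mul_uKb_finL (j : Fin (n - 1)) :
    v • (uEb n j * uKb n (finL j)) = uE n j * uKinv n (finL j) - uKb n (finL j) * uEb n j := by
  rw [eq_sub_iff_add_eq']
  simpa only [uKinv, uKb, uE, uEb, map_mul, map_smul, map_add] using mk_eq_of_rel (qRel.KbEb j)

lemma uEb_mul_uKb_finR (j : Fin (n - 1)) :
    uEb n j * uKb n (finR j) = uKinv n (finR j) * uE n j - v • (uKb n (finR j) * uEb n j) := by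
  rw [eq_sub_iff_add_eq']
  simpa only [uKinv, uKb, uE, uEb, map_mul, map_smul, map_add] using mk_eq_of_rel (qRel.KbEb' j)

lemma uEb_mul_uKb_of_ne {i : Fin n} {j : Fin (n - 1)} (hL : i ≠ finL j) (hR : i ≠ finR j) :
    uEb n j * uKb n i = -(uKb n i * uEb n j) := by
  rw [← add_eq_zero_iff_eq_neg']
  simpa only [uKb, uEb, map_mul, map_add, map_zero] using
    mk_eq_of_rel (qRel.KbEbcomm i j (Fin.val_ne_iff.2 hL) (Fin.val_ne_iff.2 hR))

lemma uE_mul_uF (i j : Fin (n - 1)) :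
    uE n i * uF n j = uF n j * uE n i + (dlt i j * (1 / (v - v⁻¹))) •
      (uK n (finL i) * uKinv n (finR i) - uKinv n (finL i) * uK n (finR i)) := by
  rw [← sub_eq_iff_eq_add']
  simpa only [uK, uKinv, uE, uF, map_mul, map_smul, map_sub] using mk_eq_of_rel (qRel.EF i j)

lemma uEb_mul_uFb (i j : Fin (n - 1)) :
    uEb n i * uFb n j = dlt i j •
      ((1 / (v - v⁻¹)) • (uK n (finL i) * uK n (finR i) - uKinv n (finL i) * uKinv n (finR i))
        + (v - v⁻¹) • (uKb n (finL i) * uKb n (finR i))) - uFb n j * uEb n i := by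
  rw [eq_sub_iff_add_eq]
  simpa only [uK, uKinv, uKb, uEb, uFb, map_mul, map_smul, map_sub, map_add] using
    mk_eq_of_rel (qRel.EbFb i j)

lemma uE_mul_uFb (i j : Fin (n - 1)) :
    uE n i * uFb n j = uFb n j * uE n i + dlt i j •
      (uKinv n (finR i) * uKb n (finL i) - uKb n (finR i) * uKinv n (finL i)) := by
  rw [← sub_eq_iff_eq_add']
  simpa only [uKinv, uKb, uE, uFb, map_mul, map_smul, map_sub] using mk_eq_of_rel (qRel.EFb i j)

lemma uEb_mul_uF (i j : Fin (n - 1)) :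
    uEb n i * uF n j = uF n j * uEb n i + dlt i j •
      (uK n (finR i) * uKb n (finL i) - uKb n (finR i) * uK n (finL i)) := by
  rw [← sub_eq_iff_eq_add']
  simpa only [uK, uKb, uEb, uF, map_mul, map_smul, map_sub] using mk_eq_of_rel (qRel.EbF i j)

end Generators

section AdWeight

variable {n : ℕ}

/-- `u` has weight `χ` under conjugation by the torus: `K_i u K_i⁻¹ = χ_i u` for all `i`. -/
def HasAdWeight (χ : Fin n → Fˣ) (u : Uq n) : Prop :=
  ∀ i, uK n i * u = (χ i : F) • (u * uK n i)

/-- The weight `v^{α_j}` of the raising generators `E_j` and `Ē_j`. -/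
def simpleRoot (j : Fin (n - 1)) : Fin n → Fˣ := fun i => vU ^ pr i j

lemma coe_simpleRoot (j : Fin (n - 1)) (i : Fin n) : (simpleRoot j i : F) = v ^ pr i j := by
  simp only [simpleRoot, Units.val_zpow_eq_zpow_val, vU, Units.val_mk0]

lemma coe_simpleRoot_inv (j : Fin (n - 1)) (i : Fin n) :
    ((simpleRoot j)⁻¹ i : F) = v ^ (-pr i j) := by
  rw [Pi.inv_apply, Units.val_inv_eq_inv_val, coe_simpleRoot, zpow_neg]

lemma hasAdWeight_uE (j : Fin (n - 1)) : HasAdWeight (simpleRoot j) (uE n j) := fun i => by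
  simpa only [coe_simpleRoot, uK, uE, map_mul, map_smul] using mk_eq_of_rel (qRel.KE i j)

lemma hasAdWeight_uEb (j : Fin (n - 1)) : HasAdWeight (simpleRoot j) (uEb n j) := fun i => by
  simpa only [coe_simpleRoot, uK, uEb, map_mul, map_smul] using mk_eq_of_rel (qRel.KEb i j)

lemma hasAdWeight_uF (j : Fin (n - 1)) : HasAdWeight (simpleRoot j)⁻¹ (uF n j) := fun i => by
  simpa only [coe_simpleRoot_inv, uK, uF, map_mul, map_smul] using mk_eq_of_rel (qRel.KF i j)

lemma hasAdWeight_uFb (j : Fin (n - 1)) : HasAdWeight (simpleRoot j)⁻¹ (uFb n j) := fun i => by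
  simpa only [coe_simpleRoot_inv, uK, uFb, map_mul, map_smul] using mk_eq_of_rel (qRel.KFb i j)

lemma hasAdWeight_uKb (j : Fin n) : HasAdWeight 1 (uKb n j) := fun i => by
  simpa only [Pi.one_apply, Units.val_one, one_smul, uK, uKb, map_mul] using
    mk_eq_of_rel (qRel.KKb i j)

lemma hasAdWeight_uK (j : Fin n) : HasAdWeight 1 (uK n j) := fun i => by
  simpa only [Pi.one_apply, Units.val_one, one_smul, uK, map_mul] using mk_eq_of_rel (qRel.KK i j)

lemma HasAdWeight.uKinv_mul {χ : Fin n → Fˣ} {u : Uq n} (hu : HasAdWeight χ u) (i : Fin n) :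
    uKinv n i * u = ((χ i)⁻¹ : Fˣ) • (u * uKinv n i) := by
  have uK_conj : uK n i * u * uKinv n i = (χ i : F) • u := by
    rw [hu i, smul_mul_assoc, mul_assoc, uK_mul_uKinv, mul_one]
  rw [eq_inv_smul_iff, Units.smul_def, ← mul_smul_comm, ← uK_conj, mul_assoc, ← mul_assoc,
    uKinv_mul_uK, one_mul]

lemma hasAdWeight_uKinv (j : Fin n) : HasAdWeight 1 (uKinv n j) := fun i => by
  simpa only [Pi.one_apply, inv_one, one_smul, Units.val_one] using
    ((hasAdWeight_uK i).uKinv_mul j).symm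

lemma HasAdWeight.exists_torus_mul_eq {χ : Fin n → Fˣ} {u t : Uq n} (hu : HasAdWeight χ u)
    (ht : t ∈ torusGens n) : ∃ c : Fˣ, t * u = c • (u * t) := by
  obtain ⟨i, rfl⟩ | ⟨i, rfl⟩ := ht
  exacts [⟨χ i, hu i⟩, ⟨(χ i)⁻¹, hu.uKinv_mul i⟩]

end AdWeight

section Triangular

open Submodule

variable {n : ℕ}

lemma uK_mem_torusGens (i : Fin n) : uK n i ∈ torusGens n := .inl ⟨i, rfl⟩

lemma uKinv_mem_torusGens (i : Fin n) : uKinv n i ∈ torusGens n := .inr ⟨i, rfl⟩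

lemma torusGens_subset_cartanGens : torusGens n ⊆ cartanGens n := Set.subset_union_left

lemma uKb_mem_cartanGens (i : Fin n) : uKb n i ∈ cartanGens n := .inr ⟨i, rfl⟩

lemma uF_mem_loweringGens (j : Fin (n - 1)) : uF n j ∈ loweringGens n := .inl ⟨j, rfl⟩

lemma uFb_mem_loweringGens (j : Fin (n - 1)) : uFb n j ∈ loweringGens n := .inr ⟨j, rfl⟩

lemma uE_mem_raisingGens (j : Fin (n - 1)) : uE n j ∈ raisingGens n := .inl ⟨j, rfl⟩

lemma uEb_mem_raisingGens (j : Fin (n - 1)) : uEb n j ∈ raisingGens n := .inr ⟨j, rfl⟩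

lemma hasAdWeight_of_mem_cartanGens {c : Uq n} (hc : c ∈ cartanGens n) : HasAdWeight 1 c := by
  obtain (⟨i, rfl⟩ | ⟨i, rfl⟩) | ⟨i, rfl⟩ := hc
  exacts [hasAdWeight_uK i, hasAdWeight_uKinv i, hasAdWeight_uKb i]

lemma exists_hasAdWeight_of_mem_raisingGens {e : Uq n} (he : e ∈ raisingGens n) :
    ∃ j, HasAdWeight (simpleRoot j) e := by
  obtain ⟨j, rfl⟩ | ⟨j, rfl⟩ := he
  exacts [⟨j, hasAdWeight_uE j⟩, ⟨j, hasAdWeight_uEb j⟩]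

lemma exists_hasAdWeight_of_mem_loweringGens {f : Uq n} (hf : f ∈ loweringGens n) :
    ∃ j, HasAdWeight (simpleRoot j)⁻¹ f := by
  obtain ⟨j, rfl⟩ | ⟨j, rfl⟩ := hf
  exacts [⟨j, hasAdWeight_uF j⟩, ⟨j, hasAdWeight_uFb j⟩]

lemma torus_mul_lowering_mem {t f : Uq n} (ht : t ∈ torusGens n) (hf : f ∈ loweringGens n) :
    t * f ∈ span F (loweringGens n) * span F (cartanGens n) := by
  obtain ⟨j, hj⟩ := exists_hasAdWeight_of_mem_loweringGens hf
  obtain ⟨c, hc⟩ := hj.exists_torus_mul_eq ht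
  rw [hc]
  exact smul_mem _ (c : F) (mul_mem_span_mul_span hf (torusGens_subset_cartanGens ht))

lemma raising_mul_torus_mem {e t : Uq n} (he : e ∈ raisingGens n) (ht : t ∈ torusGens n) :
    e * t ∈ span F (cartanGens n) * span F (raisingGens n) := by
  obtain ⟨j, hj⟩ := exists_hasAdWeight_of_mem_raisingGens he
  obtain ⟨c, hc⟩ := hj.exists_torus_mul_eq ht
  rw [eq_inv_smul_iff.2 hc.symm]
  exact smul_mem _ (↑c⁻¹ : F) (mul_mem_span_mul_span (torusGens_subset_cartanGens ht) he)

lemma uKb_mul_uF_mem (i : Fin n) (j : Fin (n - 1)) :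
    uKb n i * uF n j ∈ span F (loweringGens n) * span F (cartanGens n) := by
  have hF (i) := mul_mem_span_mul_span (R := F) (uF_mem_loweringGens j) (uKb_mem_cartanGens i)
  by_cases hL : i = finL j
  · rw [hL, uKb_finL_mul_uF]
    exact sub_mem (smul_mem _ _ (hF _)) (mul_mem_span_mul_span (uFb_mem_loweringGens j)
      (torusGens_subset_cartanGens (uK_mem_torusGens _)))
  by_cases hR : i = finR j
  · rw [hR, ← smul_mem_iff _ v_ne_zero, v_smul_uKb_finR_mul_uF]
    exact add_mem (torus_mul_lowering_mem (uK_mem_torusGens _) (uFb_mem_loweringGens j)) (hF _)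
  · rw [uKb_mul_uF_of_ne hL hR]
    exact hF i

lemma uKb_mul_uFb_mem (i : Fin n) (j : Fin (n - 1)) :
    uKb n i * uFb n j ∈ span F (loweringGens n) * span F (cartanGens n) := by
  have hFb (i) := mul_mem_span_mul_span (R := F) (uFb_mem_loweringGens j) (uKb_mem_cartanGens i)
  by_cases hL : i = finL j
  · rw [hL, uKb_finL_mul_uFb]
    exact sub_mem (mul_mem_span_mul_span (uF_mem_loweringGens j)
      (torusGens_subset_cartanGens (uK_mem_torusGens _))) (smul_mem _ _ (hFb _))
  by_cases hR : i = finR j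
  · rw [hR, ← smul_mem_iff _ v_ne_zero, v_smul_uKb_finR_mul_uFb]
    exact sub_mem (torus_mul_lowering_mem (uK_mem_torusGens _) (uF_mem_loweringGens j)) (hFb _)
  · rw [uKb_mul_uFb_of_ne hL hR]
    exact neg_mem (hFb i)

lemma uE_mul_uKb_mem (i : Fin n) (j : Fin (n - 1)) :
    uE n j * uKb n i ∈ span F (cartanGens n) * span F (raisingGens n) := by
  have hE (i) := mul_mem_span_mul_span (R := F) (uKb_mem_cartanGens i) (uE_mem_raisingGens j)
  by_cases hL : i = finL j
  · rw [hL, ← smul_mem_iff _ v_ne_zero, v_smul_uE_mul_uKb_finL]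
    exact sub_mem (hE _) (raising_mul_torus_mem (uEb_mem_raisingGens j) (uKinv_mem_torusGens _))
  by_cases hR : i = finR j
  · rw [hR, uE_mul_uKb_finR]
    exact add_mem (smul_mem _ _ (hE _)) (mul_mem_span_mul_span
      (torusGens_subset_cartanGens (uKinv_mem_torusGens _)) (uEb_mem_raisingGens j))
  · rw [uE_mul_uKb_of_ne hL hR]
    exact hE i

lemma uEb_mul_uKb_mem (i : Fin n) (j : Fin (n - 1)) :
    uEb n j * uKb n i ∈ span F (cartanGens n) * span F (raisingGens n) := by
  have hEb (i) := mul_mem_span_mul_span (R := F) (uKb_mem_cartanGens i) (uEb_mem_raisingGens j)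
  by_cases hL : i = finL j
  · rw [hL, ← smul_mem_iff _ v_ne_zero, v_smul_uEb_mul_uKb_finL]
    exact sub_mem (raising_mul_torus_mem (uE_mem_raisingGens j) (uKinv_mem_torusGens _)) (hEb _)
  by_cases hR : i = finR j
  · rw [hR, uEb_mul_uKb_finR]
    exact sub_mem (mul_mem_span_mul_span (torusGens_subset_cartanGens (uKinv_mem_torusGens _))
      (uE_mem_raisingGens j)) (smul_mem _ _ (hEb _))
  · rw [uEb_mul_uKb_of_ne hL hR]
    exact neg_mem (hEb i)

variable (n)

lemma span_cartan_mul_span_lowering_le :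
    span F (cartanGens n) * span F (loweringGens n) ≤
      span F (loweringGens n) * span F (cartanGens n) := by
  rw [span_mul_span, span_le, Set.mul_subset_iff]
  rintro c (ht | ⟨i, rfl⟩) f hf
  · exact torus_mul_lowering_mem ht hf
  · obtain ⟨j, rfl⟩ | ⟨j, rfl⟩ := hf
    exacts [uKb_mul_uF_mem i j, uKb_mul_uFb_mem i j]

lemma span_raising_mul_span_cartan_le :
    span F (raisingGens n) * span F (cartanGens n) ≤
      span F (cartanGens n) * span F (raisingGens n) := by
  rw [span_mul_span, span_le, Set.mul_subset_iff]
  rintro e he c (ht | ⟨i, rfl⟩)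
  · exact raising_mul_torus_mem he ht
  · obtain ⟨j, rfl⟩ | ⟨j, rfl⟩ := he
    exacts [uE_mul_uKb_mem i j, uEb_mul_uKb_mem i j]

lemma span_raising_mul_span_lowering_le :
    span F (raisingGens n) * span F (loweringGens n) ≤
      span F (loweringGens n) * span F (raisingGens n) ⊔ adjoinSubmodule F (cartanGens n) := by
  have sorted {f e : Uq n} (hf : f ∈ loweringGens n) (he : e ∈ raisingGens n) :
      f * e ∈ span F (loweringGens n) * span F (raisingGens n) ⊔
        adjoinSubmodule F (cartanGens n) := mem_sup_left (mul_mem_span_mul_span hf he)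
  have hK (i) : uK n i ∈ Algebra.adjoin F (cartanGens n) :=
    Algebra.subset_adjoin (torusGens_subset_cartanGens (uK_mem_torusGens i))
  have hKinv (i) : uKinv n i ∈ Algebra.adjoin F (cartanGens n) :=
    Algebra.subset_adjoin (torusGens_subset_cartanGens (uKinv_mem_torusGens i))
  have hKb (i) : uKb n i ∈ Algebra.adjoin F (cartanGens n) :=
    Algebra.subset_adjoin (uKb_mem_cartanGens i)
  rw [span_mul_span, span_le, Set.mul_subset_iff]
  rintro _ (⟨i, rfl⟩ | ⟨i, rfl⟩) _ (⟨j, rfl⟩ | ⟨j, rfl⟩)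
  · rw [uE_mul_uF]
    exact add_mem (sorted (uF_mem_loweringGens j) (uE_mem_raisingGens i))
      (mem_sup_right (Subalgebra.smul_mem _
        (sub_mem (mul_mem (hK _) (hKinv _)) (mul_mem (hKinv _) (hK _))) _))
  · rw [uE_mul_uFb]
    exact add_mem (sorted (uFb_mem_loweringGens j) (uE_mem_raisingGens i))
      (mem_sup_right (Subalgebra.smul_mem _
        (sub_mem (mul_mem (hKinv _) (hKb _)) (mul_mem (hKb _) (hKinv _))) _))
  · rw [uEb_mul_uF]
    exact add_mem (sorted (uF_mem_loweringGens j) (uEb_mem_raisingGens i))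
      (mem_sup_right (Subalgebra.smul_mem _
        (sub_mem (mul_mem (hK _) (hKb _)) (mul_mem (hKb _) (hK _))) _))
  · rw [uEb_mul_uFb]
    exact sub_mem
      (mem_sup_right (Subalgebra.smul_mem _ (add_mem
        (Subalgebra.smul_mem _ (sub_mem (mul_mem (hK _) (hK _)) (mul_mem (hKinv _) (hKinv _))) _)
        (Subalgebra.smul_mem _ (mul_mem (hKb _) (hKb _)) _)) _))
      (sorted (uFb_mem_loweringGens j) (uEb_mem_raisingGens i))

theorem lowering_mul_cartan_mul_raising_eq_top :
    adjoinSubmodule F (loweringGens n) *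
      (adjoinSubmodule F (cartanGens n) * adjoinSubmodule F (raisingGens n)) = ⊤ :=
  adjoinSubmodule_mul_mul_eq_top (adjoin_gens_eq_top n) (span_cartan_mul_span_lowering_le n)
    (span_raising_mul_span_cartan_le n) (span_raising_mul_span_lowering_le n)

end Triangular

section WeightOrder

variable {n : ℕ} {ω γ κ : Fin n → Fˣ}

lemma vU_pow_injective : Function.Injective fun k : ℕ => vU ^ k := fun a b h => by
  have X_pow_eq : (Polynomial.X : Polynomial ℚ) ^ a = Polynomial.X ^ b :=
    RatFunc.algebraMap_injective ℚ <| by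
      simpa only [map_pow, RatFunc.algebraMap_X, Units.val_pow_eq_pow_val, vU, Units.val_mk0, v]
        using congrArg Units.val h
  simpa only [Polynomial.natDegree_X_pow] using congrArg Polynomial.natDegree X_pow_eq

variable (n) in
/-- The element `v^β` for `β = ∑_j b_j α_j`, with `α_j = ε_j - ε_{j+1}` and `j` counted from `1`
as in `wge`. -/
def vPow (b : ℕ → ℕ) : Fin n → Fˣ := fun i => vU ^ b (i + 1) * (vU ^ b i)⁻¹

lemma wge_iff : wge n ω γ ↔ ∃ b : ℕ → ℕ, b 0 = 0 ∧ b n = 0 ∧ ω = vPow n b * γ := by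
  simp only [wge, funext_iff, vPow, Pi.mul_apply]

lemma vPow_zero : vPow n 0 = 1 := by
  ext1 i
  simp only [vPow, Pi.zero_apply, pow_zero, inv_one, mul_one, Pi.one_apply]

lemma vPow_add (b c : ℕ → ℕ) : vPow n (b + c) = vPow n b * vPow n c := by
  ext1 i
  simp only [vPow, Pi.add_apply, pow_add, mul_inv, Pi.mul_apply, mul_mul_mul_comm]

lemma eq_zero_of_vPow_eq_one {b : ℕ → ℕ} (hb : b 0 = 0) (h : vPow n b = 1) :
    ∀ k ≤ n, b k = 0
  | 0, _ => hb
  | k + 1, hk => by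
    rw [← eq_zero_of_vPow_eq_one hb h k (Nat.le_of_succ_le hk)]
    exact vU_pow_injective (mul_inv_eq_one.1 (congrFun h ⟨k, hk⟩))

lemma wge_refl (ω : Fin n → Fˣ) : wge n ω ω :=
  wge_iff.2 ⟨0, rfl, rfl, by rw [vPow_zero, one_mul]⟩

lemma wge_trans (h₁ : wge n ω γ) (h₂ : wge n γ κ) : wge n ω κ := by
  obtain ⟨b, hb₀, hbn, rfl⟩ := wge_iff.1 h₁
  obtain ⟨c, hc₀, hcn, rfl⟩ := wge_iff.1 h₂
  exact wge_iff.2 ⟨b + c, Nat.add_eq_zero_iff.2 ⟨hb₀, hc₀⟩, Nat.add_eq_zero_iff.2 ⟨hbn, hcn⟩,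
    by rw [vPow_add, mul_assoc]⟩

lemma wge_antisymm (h₁ : wge n ω γ) (h₂ : wge n γ ω) : ω = γ := by
  obtain ⟨b, hb₀, -, hb⟩ := wge_iff.1 h₁
  obtain ⟨c, hc₀, -, hc⟩ := wge_iff.1 h₂
  have vPow_add_eq_one : vPow n (b + c) = 1 := by
    rw [vPow_add, ← mul_eq_right (b := ω), mul_assoc, ← hc, ← hb]
  have add_eq_zero : ∀ k ≤ n, b k + c k = 0 :=
    eq_zero_of_vPow_eq_one (Nat.add_eq_zero_iff.2 ⟨hb₀, hc₀⟩) vPow_add_eq_one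
  have b_eq_zero (k) (hk : k ≤ n) : b k = 0 := (Nat.add_eq_zero_iff.1 (add_eq_zero k hk)).1
  rw [hb, mul_eq_right]
  ext1 i
  rw [vPow, b_eq_zero _ i.2, b_eq_zero _ i.2.le, mul_inv_cancel, Pi.one_apply]

variable (n) in
/-- The order `≥` on weights as a `PartialOrder`; not an instance, since `Fin n → Fˣ` is a plain
function type. -/
abbrev weightPartialOrder : PartialOrder (Fin n → Fˣ) where
  le γ ω := wge n ω γ
  le_refl := wge_refl
  le_trans _ _ _ h₁ h₂ := wge_trans h₂ h₁
  le_antisymm _ _ h₁ h₂ := wge_antisymm h₂ h₁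

lemma simpleRoot_eq_vPow (j : Fin (n - 1)) : simpleRoot j = vPow n (Pi.single (j + 1) 1) := by
  ext1 i
  have pr_eq :
      pr i j = (Pi.single (j + 1) 1 : ℕ → ℕ) (i + 1) - (Pi.single (j + 1) 1 : ℕ → ℕ) i := by
    simp only [pr, Pi.single_apply, add_left_inj, Nat.cast_ite, Nat.cast_one, Nat.cast_zero]
  rw [simpleRoot, vPow, pr_eq, zpow_sub, zpow_natCast, zpow_natCast]

lemma wge_simpleRoot_mul (j : Fin (n - 1)) (ω : Fin n → Fˣ) : wge n (simpleRoot j * ω) ω :=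
  wge_iff.2 ⟨Pi.single (j + 1) 1, Pi.single_eq_of_ne (Nat.succ_ne_zero _).symm _,
    Pi.single_eq_of_ne (by lia) _, by rw [simpleRoot_eq_vPow]⟩

lemma wge_simpleRoot_inv_mul (j : Fin (n - 1)) (ω : Fin n → Fˣ) :
    wge n ω ((simpleRoot j)⁻¹ * ω) := by
  simpa only [mul_inv_cancel_left] using wge_simpleRoot_mul j ((simpleRoot j)⁻¹ * ω)

lemma simpleRoot_ne_one (j : Fin (n - 1)) : simpleRoot j ≠ 1 := fun h => by
  rw [simpleRoot_eq_vPow] at h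
  have coeff_eq_zero : (Pi.single (j + 1) 1 : ℕ → ℕ) (j + 1) = 0 :=
    eq_zero_of_vPow_eq_one (Pi.single_eq_of_ne (Nat.succ_ne_zero _).symm _) h _ (by lia)
  exact one_ne_zero ((Pi.single_eq_same _ _).symm.trans coeff_eq_zero)

lemma wgt_simpleRoot_mul (j : Fin (n - 1)) (ω : Fin n → Fˣ) : wgt n (simpleRoot j * ω) ω :=
  ⟨wge_simpleRoot_mul j ω, fun h => simpleRoot_ne_one j (mul_eq_right.1 h)⟩

end WeightOrder

section WeightModules

open Submodule

variable {n : ℕ} {M : Type} [AddCommGroup M] [Module F M] [Module (Uq n) M]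
  [IsScalarTower F (Uq n) M] {ω γ : Fin n → Fˣ}

lemma HasAdWeight.smul_mem_weightSpace {χ : Fin n → Fˣ} {u : Uq n} (hu : HasAdWeight χ u) {x : M}
    (hx : x ∈ weightSpace n M ω) : u • x ∈ weightSpace n M (χ * ω) := fun i => by
  rw [← mul_smul, hu i, smul_assoc, mul_smul, hx i, uq_smul_f_smul, Pi.mul_apply, Units.val_mul,
    mul_smul]

lemma HasAdWeight.smul_mem_iSup_weightSpace {χ : Fin n → Fˣ} {u : Uq n} (hu : HasAdWeight χ u)
    {S : Set (Fin n → Fˣ)} (hS : ∀ γ ∈ S, χ * γ ∈ S) {x : M}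
    (hx : x ∈ ⨆ γ ∈ S, weightSpace n M γ) : u • x ∈ ⨆ γ ∈ S, weightSpace n M γ := by
  suffices h : ⨆ γ ∈ S, weightSpace n M γ ≤
      (⨆ γ ∈ S, weightSpace n M γ).comap (Algebra.lsmul F F M u) from h hx
  exact iSup₂_le fun γ hγ y hy =>
    le_biSup (weightSpace n M) (hS γ hγ) (hu.smul_mem_weightSpace hy)

lemma IsWeightModule.iSupIndep_weightSpace (h : IsWeightModule n M) :
    iSupIndep (weightSpace n M) :=
  iSupIndep_ne_bot.1 h.1

lemma IsWeightModule.exists_isWeight [Nontrivial M] (h : IsWeightModule n M) :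
    ∃ ω, IsWeight n M ω := by
  by_contra! hne
  have : IsEmpty {ω : Fin n → Fˣ // IsWeight n M ω} := ⟨fun ω => hne ω.1 ω.2⟩
  exact bot_ne_top ((iSup_of_empty _).symm.trans h.2)

lemma IsWeightModule.exists_isMaximalWeight [Nontrivial M] [FiniteDimensional F M]
    (h : IsWeightModule n M) : ∃ ω, IsMaximalWeight n M ω := by
  let := weightPartialOrder n
  have weights_finite : {γ | IsWeight n M γ}.Finite :=
    WellFoundedGT.finite_ne_bot_of_iSupIndep h.iSupIndep_weightSpace
  obtain ⟨ω, hω, hmax⟩ := weights_finite.exists_maximal h.exists_isWeight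
  exact ⟨ω, hω, fun γ hγ hgt => hgt.2 (wge_antisymm hgt.1 (hmax hγ hgt.1))⟩

lemma IsMaximalWeight.weightSpace_simpleRoot_mul (h : IsMaximalWeight n M ω) (j : Fin (n - 1)) :
    weightSpace n M (simpleRoot j * ω) = ⊥ :=
  not_not.1 fun hne => h.2 _ hne (wgt_simpleRoot_mul j ω)

lemma IsMaximalWeight.raising_smul_eq_zero (h : IsMaximalWeight n M ω) {e : Uq n}
    (he : e ∈ raisingGens n) {x : M} (hx : x ∈ weightSpace n M ω) : e • x = 0 := by
  obtain ⟨j, hj⟩ := exists_hasAdWeight_of_mem_raisingGens he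
  rw [← mem_bot F, ← h.weightSpace_simpleRoot_mul j]
  exact hj.smul_mem_weightSpace hx

lemma IsMaximalWeight.isHWVector (h : IsMaximalWeight n M ω) {m : M}
    (hm : m ∈ weightSpace n M ω) (hne : m ≠ 0) : IsHWVector n M ω m :=
  ⟨hne, hm, fun j => ⟨h.raising_smul_eq_zero (uE_mem_raisingGens j) hm,
    h.raising_smul_eq_zero (uEb_mem_raisingGens j) hm⟩⟩

lemma IsHWVector.adjoinSubmodule_raisingGens_smul_le {m : M} (h : IsHWVector n M ω m) :
    adjoinSubmodule F (raisingGens n) • span F {m} ≤ span F {m} := by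
  refine adjoinSubmodule_smul_le fun e he x hx => ?_
  have raising_smul_eq_zero : e • m = 0 := by
    obtain ⟨j, rfl⟩ | ⟨j, rfl⟩ := he
    exacts [(h.2.2 j).1, (h.2.2 j).2]
  obtain ⟨c, rfl⟩ := mem_span_singleton.1 hx
  rw [uq_smul_f_smul, raising_smul_eq_zero, smul_zero]
  exact zero_mem _

lemma adjoinSubmodule_cartanGens_smul_weightSpace_le (ω : Fin n → Fˣ) :
    adjoinSubmodule F (cartanGens n) • weightSpace n M ω ≤ weightSpace n M ω :=
  adjoinSubmodule_smul_le fun _ hc _ hx =>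
    one_mul ω ▸ (hasAdWeight_of_mem_cartanGens hc).smul_mem_weightSpace hx

lemma adjoinSubmodule_loweringGens_smul_iSup_weightSpace_le (ω : Fin n → Fˣ) :
    adjoinSubmodule F (loweringGens n) • ⨆ γ ∈ {γ | wge n ω γ}, weightSpace n M γ ≤
      ⨆ γ ∈ {γ | wge n ω γ}, weightSpace n M γ := by
  refine adjoinSubmodule_smul_le fun f hf _ hx => ?_
  obtain ⟨j, hj⟩ := exists_hasAdWeight_of_mem_loweringGens hf
  exact hj.smul_mem_iSup_weightSpace (S := {γ | wge n ω γ})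
    (fun γ hγ => wge_trans hγ (wge_simpleRoot_inv_mul j γ)) hx

lemma IsHWModule.iSup_weightSpace_eq_top (h : IsHWModule n M ω) :
    ⨆ γ ∈ {γ | wge n ω γ}, weightSpace n M γ = ⊤ := by
  obtain ⟨m, hm, hspan⟩ := h
  have span_le_weightSpace : span F {m} ≤ weightSpace n M ω :=
    (span_singleton_le_iff_mem _ _).2 hm.2.1
  have generated : (⊤ : Submodule F (Uq n)) • span F {m} = ⊤ := eq_top_iff.2 fun x _ => by
    obtain ⟨u, rfl⟩ := mem_span_singleton.1 (hspan ▸ mem_top : x ∈ span (Uq n) {m})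
    exact smul_mem_smul mem_top (mem_span_singleton_self m)
  refine top_le_iff.1 ?_
  calc ⊤ = adjoinSubmodule F (loweringGens n) • adjoinSubmodule F (cartanGens n) •
        adjoinSubmodule F (raisingGens n) • span F {m} := by
        rw [← generated, ← lowering_mul_cartan_mul_raising_eq_top, ← smul_eq_mul, ← smul_eq_mul,
          Submodule.smul_assoc, Submodule.smul_assoc]
    _ ≤ adjoinSubmodule F (loweringGens n) • adjoinSubmodule F (cartanGens n) •
        weightSpace n M ω := by
      gcongr; exact hm.adjoinSubmodule_raisingGens_smul_le.trans span_le_weightSpace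
    _ ≤ adjoinSubmodule F (loweringGens n) • ⨆ γ ∈ {γ | wge n ω γ}, weightSpace n M γ := by
      gcongr
      exact (adjoinSubmodule_cartanGens_smul_weightSpace_le ω).trans
        (le_biSup (weightSpace n M) (wge_refl ω))
    _ ≤ ⨆ γ ∈ {γ | wge n ω γ}, weightSpace n M γ :=
      adjoinSubmodule_loweringGens_smul_iSup_weightSpace_le ω

lemma IsHWModule.wge_of_isWeight (h : IsHWModule n M ω) (hind : iSupIndep (weightSpace n M))
    (hγ : IsWeight n M γ) : wge n ω γ := by
  by_contra hlt
  have disjoint_of_top : Disjoint (weightSpace n M γ) ⊤ :=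
    h.iSup_weightSpace_eq_top ▸ hind.disjoint_biSup hlt
  exact hγ (disjoint_top.1 disjoint_of_top)

end WeightModules

/-- Proposition 3.3: a nonzero finite-dimensional simple weight
`U_v`-module has exactly one maximal weight `ω`, is a highest weight module of
highest weight `ω`, and `E_j, Ē_j` annihilate `M_ω`. -/
theorem simple_fd_weight_module_is_hw (n : ℕ) (hn : 2 ≤ n)
    (M : Type) [AddCommGroup M] [Module F M] [Module (Uq n) M] [IsScalarTower F (Uq n) M]
    [Nontrivial M] [FiniteDimensional F M]
    (hsimple : ∀ N : Submodule (Uq n) M, N = ⊥ ∨ N = ⊤)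
    (hweight : IsWeightModule n M) :
    ∃ ω : Fin n → Fˣ, IsMaximalWeight n M ω ∧
      (∀ γ : Fin n → Fˣ, IsMaximalWeight n M γ → γ = ω) ∧
      (∀ j : Fin (n - 1), ∀ x ∈ weightSpace n M ω, uE n j • x = 0 ∧ uEb n j • x = 0) ∧
      (∃ m : M, m ∈ weightSpace n M ω ∧ IsHWVector n M ω m ∧
        Submodule.span (Uq n) {m} = ⊤) := by
  obtain ⟨ω, hω⟩ := hweight.exists_isMaximalWeight
  obtain ⟨m, hm, hm0⟩ := Submodule.exists_mem_ne_zero_of_ne_bot hω.1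
  have hhw : IsHWVector n M ω m := hω.isHWVector hm hm0
  have hspan : Submodule.span (Uq n) {m} = ⊤ :=
    (hsimple _).resolve_left (mt Submodule.span_singleton_eq_bot.1 hm0)
  have le_highest : ∀ γ, IsWeight n M γ → wge n ω γ := fun _ =>
    IsHWModule.wge_of_isWeight ⟨m, hhw, hspan⟩ hweight.iSupIndep_weightSpace
  refine ⟨ω, hω, fun γ hγ => ?_, fun j x hx => ?_, m, hm, hhw, hspan⟩
  · by_contra hne
    exact hγ.2 ω hω.1 ⟨le_highest γ hγ.1, Ne.symm hne⟩
  · exact ⟨hω.raising_smul_eq_zero (uE_mem_raisingGens j) hx,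
      hω.raising_smul_eq_zero (uEb_mem_raisingGens j) hx⟩

end QueerPaper
end
end

section
/- Let M be a U_v-module, let 1 ≤ i ≤ n−2, and let m ∈ M satisfy F_{i+1}·m = 0. Then for all integers p, k ≥ 1 with p ≤ k there exists a scalar t_{p,k} ∈ F such that F_i·F_{i+1}^p·F_i^k·m = t_{p,k}·F_{i+1}^p·F_i^{k+1}·m. (Proposition 4.8 of the paper; there it is stated for a weight vector m of weight λ with λ_{i+1} = 0 and λ_i ≥ k in the twisted queer q-Schur superalgebra, in which case F_{i+1}·m = 0 holds, and the proof uses only this relation together with the quantum Serre relations (QQ6).) -/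
open scoped BigOperators

noncomputable section

namespace QueerPaper

/-!
On a vector `m` killed by `b`, the Serre relation for `(a, b)` turns `a b aᵏ m` into a multiple of
`b aᵏ⁺¹ m`, the coefficient being a ratio of consecutive quantum integers. The Serre relation for
`(b, a)` then makes the coefficients `t_p` for `a bᵖ aᵏ m` satisfy the three-term recurrence
`t_(p+2) = (v + v⁻¹) t_(p+1) - t_p` of the quantum integers, run downwards from `[k + 1]`, so that
`t_p = [k + 1 - p] / [k + 1]`. Quantum integers are values of the rescaled Chebyshev polynomials,
`[k + 1] = S_k(v + v⁻¹)`, and they are nonzero for `k ≥ 0` because `v` is not a root of unity.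
-/

section QuantumSerre

open Polynomial.Chebyshev (S S_add_one S_sub_one)

variable {R A M : Type*} [CommRing R] [Ring A] [Algebra R A]
  [AddCommGroup M] [Module R M] [Module A M] [IsScalarTower R A M] {q : R} {a b : A} {m : M}

/-- The quantum Serre relation of type `A₂` between `a` and `b`. The parameter `q` is the quantum
integer `[2]`, that is `v + v⁻¹` in `U_v`, so that no inverse is needed in `R`. -/
def QuantumSerre (q : R) (a b : A) : Prop :=
  a ^ 2 * b - q • (a * b * a) + b * a ^ 2 = 0

lemma QuantumSerre.smul_smul_smul_smul (hab : QuantumSerre q a b) (x : M) :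
    q • a • b • a • x = a • a • b • x + b • a • a • x := by
  have h := congrArg (fun u : A ↦ u • x) hab
  simp only [add_smul, sub_smul, smul_assoc, mul_smul, pow_two, zero_smul] at h
  rw [← sub_eq_zero, ← neg_eq_zero, ← h]
  abel

lemma QuantumSerre.eval_S_smul_smul_pow (hab : QuantumSerre q a b) (hm : b • m = 0) (k : ℕ) :
    (S R k).eval q • a • b • a ^ k • m = (S R (k - 1)).eval q • b • a ^ (k + 1) • m := by
  induction k with
  | zero => simp [hm]
  | succ k ih =>
    have hS : (S R (k + 1)).eval q = (S R k).eval q * q - (S R (k - 1)).eval q := by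
      simp [S_add_one, mul_comm]
    set x := a ^ k • m with hx
    have ha (l : ℕ) : a ^ (l + 1) • m = a • a ^ l • m := by rw [pow_succ', mul_smul]
    rw [ha, ← hx] at ih
    rw [ha (k + 1), ha k, ← hx, Nat.cast_succ, hS, add_sub_cancel_right]
    calc ((S R k).eval q * q - (S R (k - 1)).eval q) • a • b • a • x
      _ = (S R k).eval q • q • a • b • a • x - a • (S R (k - 1)).eval q • b • a • x := by
        rw [sub_smul, mul_smul, smul_comm a (_ : R)]
      _ = (S R k).eval q • (a • a • b • x + b • a • a • x)
            - (S R k).eval q • a • a • b • x := by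
        rw [hab.smul_smul_smul_smul, ← ih, smul_comm a (_ : R)]
      _ = (S R k).eval q • b • a • a • x := by rw [smul_add, add_sub_cancel_left]

lemma QuantumSerre.eval_S_smul_smul_pow_smul_pow (hab : QuantumSerre q a b)
    (hba : QuantumSerre q b a) (hm : b • m = 0) (p k : ℕ) :
    (S R k).eval q • a • b ^ p • a ^ k • m
      = (S R (k - p)).eval q • b ^ p • a ^ (k + 1) • m := by
  induction p using Nat.twoStepInduction with
  | zero => simp [pow_succ', mul_smul]
  | one => simpa using hab.eval_S_smul_smul_pow hm k
  | more p ih₀ ih₁ =>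
    have hS : (S R (k - (p + 2 : ℕ))).eval q
        = q * (S R (k - (p + 1 : ℕ))).eval q - (S R (k - p)).eval q := by
      rw [show (k - (p + 2 : ℕ) : ℤ) = k - (p + 1 : ℕ) - 1 by push_cast; ring, S_sub_one,
        show (k - (p + 1 : ℕ) + 1 : ℤ) = k - p by push_cast; ring]
      simp
    have hb (l : ℕ) (x : M) : b ^ (l + 1) • x = b • b ^ l • x := by rw [pow_succ', mul_smul]
    set x := b ^ p • a ^ k • m with hx
    set y := b ^ p • a ^ (k + 1) • m with hy
    rw [hb, hb, ← hx, ← hy] at ih₁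
    rw [hb, hb, hb, hb, ← hx, ← hy, hS]
    calc (S R k).eval q • a • b • b • x
      _ = (S R k).eval q • (q • b • a • b • x - b • b • a • x) := by
        rw [hba.smul_smul_smul_smul, add_sub_cancel_left]
      _ = q • b • (S R k).eval q • a • b • x - b • b • (S R k).eval q • a • x := by
        rw [smul_sub, smul_comm _ q]
        simp only [smul_comm b (_ : R)]
      _ = q • b • (S R (k - (p + 1 : ℕ))).eval q • b • y
            - b • b • (S R (k - p)).eval q • y := by rw [ih₀, ih₁]
      _ = (q * (S R (k - (p + 1 : ℕ))).eval q - (S R (k - p)).eval q) • b • b • y := by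
        simp only [sub_smul, mul_smul, smul_comm b (_ : R)]

end QuantumSerre

section QuantumInteger

open Polynomial.Chebyshev (S S_one S_add_two)

variable {K : Type*} [Field K] {x : K}

lemma sub_inv_mul_eval_S_add_inv (hx : x ≠ 0) (k : ℕ) :
    (x - x⁻¹) * (S K k).eval (x + x⁻¹) = x ^ (k + 1) - x⁻¹ ^ (k + 1) := by
  induction k using Nat.twoStepInduction with
  | zero => simp
  | one =>
    rw [Nat.cast_one, S_one, Polynomial.eval_X]
    ring
  | more k ih₀ ih₁ =>
    have hS : (S K (k + 2 : ℕ)).eval (x + x⁻¹)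
        = (x + x⁻¹) * (S K (k + 1 : ℕ)).eval (x + x⁻¹) - (S K k).eval (x + x⁻¹) := by
      simp [S_add_two]
    rw [hS]
    linear_combination (x + x⁻¹) * ih₁ - ih₀
      + (x ^ (k + 1) - x⁻¹ ^ (k + 1)) * mul_inv_cancel₀ hx

lemma eval_S_add_inv_ne_zero (hx : x ≠ 0) {k : ℕ} (hk : x ^ (2 * (k + 1)) ≠ 1) :
    (S K k).eval (x + x⁻¹) ≠ 0 := by
  intro hS
  have hpow : x ^ (k + 1) = (x ^ (k + 1))⁻¹ := by
    rw [← inv_pow, ← sub_eq_zero, ← sub_inv_mul_eval_S_add_inv hx k, hS, mul_zero]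
  refine hk ?_
  rw [two_mul, pow_add]
  nth_rw 2 [hpow]
  exact mul_inv_cancel₀ (pow_ne_zero _ hx)

lemma ratFunc_X_pow_ne_one {k : ℕ} (hk : 0 < k) : (RatFunc.X : RatFunc K) ^ k ≠ 1 := fun h ↦
  (RatFunc.transcendental_X (K := K)).pow hk (h ▸ isAlgebraic_one)

end QuantumInteger

lemma quantumSerre_uF {n : ℕ} {i j : Fin (n - 1)}
    (hij : (i : ℕ) = (j : ℕ) + 1 ∨ (j : ℕ) = (i : ℕ) + 1) :
    QuantumSerre (v + v⁻¹) (uF n i) (uF n j) := by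
  have h : mk n _ = mk n _ := RingQuot.mkAlgHom_rel F (qRel.serreF i j hij)
  simp only [map_add, map_sub, map_mul, map_pow, map_smul, map_zero] at h
  exact h

open Polynomial.Chebyshev (S) in
theorem f_order'_general {n : ℕ} {M : Type*} [AddCommGroup M] [Module F M] [Module (Uq n) M]
    [IsScalarTower F (Uq n) M] {i j : Fin (n - 1)}
    (hij : (i : ℕ) = (j : ℕ) + 1 ∨ (j : ℕ) = (i : ℕ) + 1) {m : M} (hm : uF n j • m = 0)
    (p k : ℕ) :
    uF n i • uF n j ^ p • uF n i ^ k • m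
      = ((S F (k - p)).eval (v + v⁻¹) / (S F k).eval (v + v⁻¹)) •
          uF n j ^ p • uF n i ^ (k + 1) • m := by
  have hS : (S F k).eval (v + v⁻¹) ≠ 0 :=
    eval_S_add_inv_ne_zero v_ne_zero (ratFunc_X_pow_ne_one (by omega))
  have hsmul := (quantumSerre_uF hij).eval_S_smul_smul_pow_smul_pow (quantumSerre_uF hij.symm)
    hm p k
  rw [div_eq_inv_mul, mul_smul, ← hsmul, inv_smul_smul₀ hS]

/-- Proposition 4.8: if `F_{i+1}·m = 0` then for all `1 ≤ p ≤ k` there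
is a scalar `t_{p,k}` with `F_i F_{i+1}^p F_i^k m = t_{p,k} F_{i+1}^p F_i^{k+1} m`. -/
theorem f_order' (n : ℕ) (hn : 2 ≤ n)
    (M : Type) [AddCommGroup M] [Module F M] [Module (Uq n) M] [IsScalarTower F (Uq n) M]
    (j : Fin (n - 1)) (h : (j : ℕ) + 1 < n - 1) (m : M)
    (hm : uF n ⟨(j : ℕ) + 1, h⟩ • m = 0)
    (p k : ℕ) (hp : 1 ≤ p) (hk : 1 ≤ k) (hpk : p ≤ k) :
    ∃ t : F,
      uF n j • ((uF n ⟨(j : ℕ) + 1, h⟩ ^ p) • ((uF n j ^ k) • m))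
        = t • ((uF n ⟨(j : ℕ) + 1, h⟩ ^ p) • ((uF n j ^ (k + 1)) • m)) :=
  ⟨_, f_order'_general (Or.inr rfl) hm p k⟩

end QueerPaper
end
end
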